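/- Let α, β ∈ [0,1], f ∈ C^α(ℝ^d), and let δ > 0 satisfy δ ∈ [(α−β)/2, 1]. Then there is a constant N depending only on H, c, α, β, δ, d such that for all 0 < s ≤ t ≤ 1, ‖P_t^H f − P_s^H f‖_{C^β} ≤ N s^{H(α−β) − 2Hδ} |t^{2H} − s^{2H}|^δ ‖f‖_{C^α}. -/

import Mathlib

open MeasureTheory Filter Set

noncomputable section

/-- `ℝ^d` as Euclidean space. -/
abbrev Euc (d : ℕ) := EuclideanSpace ℝ (Fin d)

/-- Gaussian density with covariance `σ` times the identity on `ℝ^d`. -/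
def gaussDensity (d : ℕ) (σ : ℝ) (x : Euc d) : ℝ :=
  (2 * Real.pi * σ) ^ (-(d : ℝ) / 2) * Real.exp (-‖x‖ ^ 2 / (2 * σ))

/-- The Gaussian convolution operator `P_t^H f = p_{c t^{2H}} ∗ f`. -/
def heatP (d : ℕ) (c H t : ℝ) (f : Euc d → ℝ) (x : Euc d) : ℝ :=
  ∫ y, gaussDensity d (c * t ^ (2 * H)) (x - y) * f y

/-- The `C^α` norm (`α ∈ [0,1]`): supremum norm plus `α`-Hölder seminorm.
(For `α = 0` this is comparable to the supremum norm.) -/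
def holderNorm (d : ℕ) (α : ℝ) (f : Euc d → ℝ) : ℝ :=
  (⨆ x, |f x|) +
    ⨆ q : {q : Euc d × Euc d // q.1 ≠ q.2}, |f q.1.1 - f q.1.2| / ‖q.1.1 - q.1.2‖ ^ α

end

/-- Radial Gaussian profile. -/
noncomputable def gs (p σ u : ℝ) : ℝ := (2 * Real.pi * σ) ^ p * Real.exp (-u / (2 * σ))

/-- Its derivative in `σ`. -/
noncomputable def gsA (p σ u : ℝ) : ℝ := gs p σ u * (p / σ + u / (2 * σ ^ 2))

lemma gs_nonneg {p σ u : ℝ} (hσ : 0 < σ) : 0 ≤ gs p σ u := by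
  unfold gs
  have := Real.pi_pos
  positivity

lemma gs_le {p σ u : ℝ} (hp : p ≤ 0) (h1 : 1 ≤ σ) (h2 : σ ≤ 2) (hu : 0 ≤ u) :
    gs p σ u ≤ Real.exp (-u / 4) := by
  unfold gs
  have hpi := Real.pi_gt_three
  have a : (2 * Real.pi * σ) ^ p ≤ 1 :=
    Real.rpow_le_one_of_one_le_of_nonpos (by nlinarith) hp
  have b : Real.exp (-u / (2 * σ)) ≤ Real.exp (-u / 4) := by
    apply Real.exp_le_exp.2
    rw [div_le_div_iff₀ (by linarith) (by norm_num)]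
    nlinarith
  calc _ ≤ 1 * Real.exp (-u / 4) := by gcongr
    _ = _ := one_mul _

lemma gs_hasDeriv_u (p σ u : ℝ) :
    HasDerivAt (fun u => gs p σ u) (gs p σ u * (-1 / (2 * σ))) u := by
  unfold gs
  have h : HasDerivAt (fun u : ℝ => -u / (2 * σ)) (-1 / (2 * σ)) u := by
    simpa using ((hasDerivAt_id u).neg).div_const (2 * σ)
  have := (h.exp).const_mul ((2 * Real.pi * σ) ^ p)
  exact this.congr_deriv (by ring)

lemma gs_hasDeriv_s (p σ u : ℝ) (hσ : 0 < σ) :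
    HasDerivAt (fun σ => gs p σ u) (gsA p σ u) σ := by
  unfold gsA gs
  have hpi := Real.pi_pos
  have h1 : HasDerivAt (fun σ : ℝ => 2 * Real.pi * σ) (2 * Real.pi) σ := by
    simpa using (hasDerivAt_id σ).const_mul (2 * Real.pi)
  have h2 := h1.rpow_const (p := p) (Or.inl (by positivity))
  have h3 : HasDerivAt (fun σ : ℝ => -u / (2 * σ)) (u / (2 * σ ^ 2)) σ := by
    have h4 : HasDerivAt (fun σ : ℝ => 2 * σ) 2 σ := by
      simpa using (hasDerivAt_id σ).const_mul 2
    have := (hasDerivAt_const σ (-u)).div h4 (by positivity)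
    refine this.congr_deriv ?_
    field_simp
    ring
  have := h2.mul h3.exp
  refine this.congr_deriv ?_
  rw [Real.rpow_sub_one (by positivity)]
  field_simp

lemma gsA_hasDeriv_u (p σ u : ℝ) :
    HasDerivAt (fun u => gsA p σ u)
      (gs p σ u * (-1 / (2 * σ)) * (p / σ + u / (2 * σ ^ 2)) + gs p σ u * (1 / (2 * σ ^ 2))) u := by
  unfold gsA
  have h : HasDerivAt (fun u : ℝ => p / σ + u / (2 * σ ^ 2)) (1 / (2 * σ ^ 2)) u := by
    exact ((hasDerivAt_id u).div_const (2 * σ ^ 2)).const_add (p / σ)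
  exact (gs_hasDeriv_u p σ u).mul h

lemma poly_exp (m u : ℝ) (hm : 0 ≤ m) (hu : 0 ≤ u) :
    Real.exp (-u / 4) * (m + 1 + u) ≤ (m + 9) * Real.exp (-u / 8) := by
  have h1 : u / 8 + 1 ≤ Real.exp (u / 8) := Real.add_one_le_exp _
  have h2 : m + 1 + u ≤ (m + 9) * Real.exp (u / 8) := by nlinarith
  calc _ ≤ Real.exp (-u / 4) * ((m + 9) * Real.exp (u / 8)) := by gcongr
    _ = (m + 9) * (Real.exp (-u / 4) * Real.exp (u / 8)) := by ring
    _ = _ := by rw [← Real.exp_add]; congr 2; ring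

lemma gs_du_bound {p σ u : ℝ} (hp : p ≤ 0) (h1 : 1 ≤ σ) (h2 : σ ≤ 2) (hu : 0 ≤ u) :
    |gs p σ u * (-1 / (2 * σ))| ≤ (-p + 9) * Real.exp (-u / 8) := by
  refine le_trans ?_ (poly_exp (-p) u (by linarith) hu)
  rw [abs_mul, abs_of_nonneg (gs_nonneg (by linarith))]
  have : |-1 / (2 * σ)| ≤ -p + 1 + u := by
    rw [abs_div, abs_neg, abs_one, abs_of_pos (by linarith), div_le_iff₀ (by linarith)]
    nlinarith
  gcongr
  exact gs_le hp h1 h2 hu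

lemma poly_bound {p σ u : ℝ} (hp : p ≤ 0) (h1 : 1 ≤ σ) (hu : 0 ≤ u) :
    |p / σ + u / (2 * σ ^ 2)| ≤ -p + u := by
  have a : |p / σ| ≤ -p := by
    rw [abs_div, abs_of_nonpos hp, abs_of_pos (by linarith), div_le_iff₀ (by linarith)]
    nlinarith
  have b : |u / (2 * σ ^ 2)| ≤ u := by
    rw [abs_of_nonneg (by positivity), div_le_iff₀ (by positivity)]
    nlinarith [mul_nonneg hu (by nlinarith : (0:ℝ) ≤ 2 * σ ^ 2 - 1)]
  exact (abs_add_le _ _).trans (add_le_add a b)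

lemma gsA_bound {p σ u : ℝ} (hp : p ≤ 0) (h1 : 1 ≤ σ) (h2 : σ ≤ 2) (hu : 0 ≤ u) :
    |gsA p σ u| ≤ (-p + 9) * Real.exp (-u / 8) := by
  refine le_trans ?_ (poly_exp (-p) u (by linarith) hu)
  unfold gsA
  rw [abs_mul, abs_of_nonneg (gs_nonneg (by linarith))]
  have := poly_bound hp h1 hu
  gcongr
  · exact gs_le hp h1 h2 hu
  · linarith

lemma gsA_du_bound {p σ u : ℝ} (hp : p ≤ 0) (h1 : 1 ≤ σ) (h2 : σ ≤ 2) (hu : 0 ≤ u) :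
    |gs p σ u * (-1 / (2 * σ)) * (p / σ + u / (2 * σ ^ 2)) + gs p σ u * (1 / (2 * σ ^ 2))|
      ≤ (-p + 9) * Real.exp (-u / 8) := by
  refine le_trans ?_ (poly_exp (-p) u (by linarith) hu)
  rw [mul_assoc, ← mul_add, abs_mul, abs_of_nonneg (gs_nonneg (by linarith))]
  have a := poly_bound hp h1 hu
  have b : |-1 / (2 * σ)| ≤ 1 := by
    rw [abs_div, abs_neg, abs_one, abs_of_pos (by linarith), div_le_iff₀ (by linarith)]
    nlinarith
  have c : |1 / (2 * σ ^ 2)| ≤ 1 := by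
    rw [abs_of_nonneg (by positivity), div_le_iff₀ (by positivity)]
    nlinarith
  have e : |-1 / (2 * σ) * (p / σ + u / (2 * σ ^ 2)) + 1 / (2 * σ ^ 2)| ≤ -p + 1 + u := by
    refine (abs_add_le _ _).trans ?_
    rw [abs_mul]
    nlinarith [abs_nonneg (p / σ + u / (2 * σ ^ 2))]
  gcongr
  exact gs_le hp h1 h2 hu

/-- Mean value in `u = |z|²` for a spatial shift `h`, `|h| ≤ 1`. -/
lemma shift_bound {d : ℕ} {L : ℝ} (hL : 0 ≤ L) (φ φ' : ℝ → ℝ)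
    (hφ : ∀ u, HasDerivAt φ (φ' u) u) (hb : ∀ u, 0 ≤ u → |φ' u| ≤ L * Real.exp (-u / 8))
    (z h : Euc d) (hh : ‖h‖ ≤ 1) :
    |φ (‖z + h‖ ^ 2) - φ (‖z‖ ^ 2)| ≤
      (64 * L) * ‖h‖ * Real.exp (-‖z‖ ^ 2 / 32) := by
  have hz := norm_nonneg z
  have hh0 := norm_nonneg h
  have n1 : ‖z + h‖ ≤ ‖z‖ + ‖h‖ := norm_add_le _ _
  have n2 : ‖z‖ ≤ ‖z + h‖ + ‖h‖ := by
    have := norm_sub_le (z + h) h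
    simpa using this
  have n0 := norm_nonneg (z + h)
  set B := L * (2 * Real.exp (-‖z‖ ^ 2 / 16)) with hB
  have key := Convex.norm_image_sub_le_of_norm_hasDerivWithin_le
    (f := φ) (f' := φ') (s := Set.Ici (max 0 (‖z‖ ^ 2 / 2 - 1))) (C := B)
    (x := ‖z‖ ^ 2) (y := ‖z + h‖ ^ 2)
    (fun x _ => (hφ x).hasDerivWithinAt) (by
      intro u hu
      have hu' := max_le_iff.1 (Set.mem_Ici.1 hu)
      refine (hb u hu'.1).trans ?_
      rw [hB]
      gcongr
      have e1 : Real.exp (-u / 8) ≤ Real.exp (1 / 8 + -‖z‖ ^ 2 / 16) := by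
        apply Real.exp_le_exp.2; linarith [hu'.2]
      rw [Real.exp_add] at e1
      have e2 : Real.exp (1 / 8) ≤ 2 := by
        have : Real.exp (1 / 8 : ℝ) ≤ Real.exp (Real.log 2) :=
          Real.exp_le_exp.2 (by linarith [Real.log_two_gt_d9])
        rwa [Real.exp_log (by norm_num)] at this
      refine e1.trans ?_
      gcongr)
    (convex_Ici _)
    (by
      rw [Set.mem_Ici, max_le_iff]; constructor <;> nlinarith)
    (by
      rw [Set.mem_Ici, max_le_iff]
      constructor
      · positivity
      · nlinarith [sq_nonneg (‖z + h‖ - ‖h‖)])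
  rw [Real.norm_eq_abs, Real.norm_eq_abs] at key
  have hd : |‖z + h‖ ^ 2 - ‖z‖ ^ 2| ≤ ‖h‖ * (2 * ‖z‖ + 1) := by
    rw [abs_le]; constructor <;> nlinarith
  have e3 : 2 * ‖z‖ + 1 ≤ 32 * Real.exp (‖z‖ ^ 2 / 32) := by
    have := Real.add_one_le_exp (‖z‖ ^ 2 / 32)
    nlinarith [sq_nonneg (‖z‖ - 1)]
  calc _ ≤ B * |‖z + h‖ ^ 2 - ‖z‖ ^ 2| := key
    _ ≤ B * (‖h‖ * (32 * Real.exp (‖z‖ ^ 2 / 32))) := by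
        have : 0 ≤ B := by positivity
        gcongr
        exact hd.trans (by gcongr)
    _ = (64 * L) * ‖h‖ * (Real.exp (-‖z‖ ^ 2 / 16) * Real.exp (‖z‖ ^ 2 / 32)) := by
        rw [hB]; ring
    _ = _ := by rw [← Real.exp_add]; congr 2; ring

lemma gaussDensity_eq (d : ℕ) (σ : ℝ) (x : Euc d) :
    gaussDensity d σ x = gs (-(d : ℝ) / 2) σ (‖x‖ ^ 2) := rfl

/-- A common constant. -/
noncomputable def kC (d : ℕ) : ℝ := 64 * (-(-(d : ℝ) / 2) + 9)

lemma kC_pos (d : ℕ) : 0 < kC d := by unfold kC; have : (0:ℝ) ≤ d := d.cast_nonneg; linarith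

lemma ker1 (d : ℕ) (z : Euc d) : |gaussDensity d 1 z| ≤ kC d * Real.exp (-‖z‖ ^ 2 / 32) := by
  have hd : (0:ℝ) ≤ d := d.cast_nonneg
  rw [gaussDensity_eq, abs_of_nonneg (gs_nonneg one_pos)]
  refine (gs_le (by linarith) le_rfl (by norm_num) (sq_nonneg _)).trans ?_
  have : Real.exp (-‖z‖ ^ 2 / 4) ≤ Real.exp (-‖z‖ ^ 2 / 32) :=
    Real.exp_le_exp.2 (by nlinarith [sq_nonneg ‖z‖])
  have h1 : 1 ≤ kC d := by unfold kC; linarith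
  nlinarith [Real.exp_pos (-‖z‖ ^ 2 / 32)]

lemma ker2 (d : ℕ) (z h : Euc d) (hh : ‖h‖ ≤ 1) :
    |gaussDensity d 1 (z + h) - gaussDensity d 1 z| ≤
      (kC d * ‖h‖) * Real.exp (-‖z‖ ^ 2 / 32) := by
  have hd : (0:ℝ) ≤ d := d.cast_nonneg
  exact shift_bound (by linarith) _ _ (gs_hasDeriv_u (-(d : ℝ) / 2) 1)
    (fun u hu => gs_du_bound (by linarith) le_rfl (by norm_num) hu) z h hh

lemma ker3 (d : ℕ) (z : Euc d) (b : ℝ) (h1 : 1 ≤ b) (h2 : b ≤ 2) :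
    |gaussDensity d b z - gaussDensity d 1 z| ≤
      (kC d * (b - 1)) * Real.exp (-‖z‖ ^ 2 / 32) := by
  have hd : (0:ℝ) ≤ d := d.cast_nonneg
  have key := Convex.norm_image_sub_le_of_norm_hasDerivWithin_le
    (f := fun σ => gs (-(d : ℝ) / 2) σ (‖z‖ ^ 2)) (f' := fun σ => gsA (-(d : ℝ) / 2) σ (‖z‖ ^ 2))
    (s := Set.Icc 1 2) (C := (-(-(d : ℝ) / 2) + 9) * Real.exp (-‖z‖ ^ 2 / 8))
    (x := 1) (y := b)
    (fun x hx => (gs_hasDeriv_s _ _ _ (by linarith [hx.1])).hasDerivWithinAt)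
    (fun x hx => gsA_bound (by linarith) hx.1 hx.2 (sq_nonneg _))
    (convex_Icc _ _) (by constructor <;> norm_num) ⟨h1, h2⟩
  rw [Real.norm_eq_abs, Real.norm_eq_abs, abs_of_nonneg (sub_nonneg.2 h1)] at key
  refine key.trans ?_
  have : Real.exp (-‖z‖ ^ 2 / 8) ≤ Real.exp (-‖z‖ ^ 2 / 32) :=
    Real.exp_le_exp.2 (by nlinarith [sq_nonneg ‖z‖])
  have h3 : -(-(d : ℝ) / 2) + 9 ≤ kC d := by unfold kC; linarith
  have h4 := kC_pos d
  have h5 : 0 ≤ b - 1 := by linarith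
  calc _ ≤ kC d * Real.exp (-‖z‖ ^ 2 / 32) * (b - 1) := by gcongr
    _ = _ := by ring

lemma ker4 (d : ℕ) (z h : Euc d) (hh : ‖h‖ ≤ 1) (b : ℝ) (h1 : 1 ≤ b) (h2 : b ≤ 2) :
    |(gaussDensity d b (z + h) - gaussDensity d 1 (z + h)) -
      (gaussDensity d b z - gaussDensity d 1 z)| ≤
      (kC d * (b - 1) * ‖h‖) * Real.exp (-‖z‖ ^ 2 / 32) := by
  have hd : (0:ℝ) ≤ d := d.cast_nonneg
  have key := Convex.norm_image_sub_le_of_norm_hasDerivWithin_le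
    (f := fun σ => gs (-(d : ℝ) / 2) σ (‖z + h‖ ^ 2) - gs (-(d : ℝ) / 2) σ (‖z‖ ^ 2))
    (f' := fun σ => gsA (-(d : ℝ) / 2) σ (‖z + h‖ ^ 2) - gsA (-(d : ℝ) / 2) σ (‖z‖ ^ 2))
    (s := Set.Icc 1 2) (C := kC d * ‖h‖ * Real.exp (-‖z‖ ^ 2 / 32))
    (x := 1) (y := b)
    (fun x hx => ((gs_hasDeriv_s _ _ _ (by linarith [hx.1])).sub
      (gs_hasDeriv_s _ _ _ (by linarith [hx.1]))).hasDerivWithinAt)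
    (fun x hx => shift_bound (by linarith) _ _ (gsA_hasDeriv_u (-(d : ℝ) / 2) x)
      (fun u hu => gsA_du_bound (by linarith) hx.1 hx.2 hu) z h hh)
    (convex_Icc _ _) (by constructor <;> norm_num) ⟨h1, h2⟩
  rw [Real.norm_eq_abs, Real.norm_eq_abs, abs_of_nonneg (sub_nonneg.2 h1)] at key
  simp only [gaussDensity_eq]
  calc _ = _ := by congr 1; ring
    _ ≤ _ := key
    _ = _ := by ring

lemma integrable_gauss_exp (d : ℕ) {b : ℝ} (hb : 0 < b) :
    Integrable (fun v : Euc d => Real.exp (-b * ‖v‖ ^ 2)) := by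
  by_contra hcon
  have h := GaussianFourier.integral_rexp_neg_mul_sq_norm (V := Euc d) hb
  rw [integral_undef hcon] at h
  have : 0 < (Real.pi / b) ^ (Module.finrank ℝ (Euc d) / 2 : ℝ) :=
    Real.rpow_pos_of_pos (div_pos Real.pi_pos hb) _
  linarith

lemma gaussDensity_eq' (d : ℕ) (σ : ℝ) :
    gaussDensity d σ = fun x : Euc d =>
      (2 * Real.pi * σ) ^ (-(d : ℝ) / 2) * Real.exp (-(1 / (2 * σ)) * ‖x‖ ^ 2) := by
  funext x
  unfold gaussDensity
  congr 2
  ring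

lemma gaussDensity_integrable (d : ℕ) {σ : ℝ} (hσ : 0 < σ) :
    Integrable (gaussDensity d σ) := by
  rw [gaussDensity_eq']
  exact (integrable_gauss_exp d (by positivity)).const_mul _

lemma gaussDensity_integral (d : ℕ) {σ : ℝ} (hσ : 0 < σ) :
    ∫ z, gaussDensity d σ z = 1 := by
  rw [gaussDensity_eq', integral_const_mul,
    GaussianFourier.integral_rexp_neg_mul_sq_norm (by positivity)]
  have hpi := Real.pi_pos
  have h1 : Real.pi / (1 / (2 * σ)) = 2 * Real.pi * σ := by field_simp
  rw [h1, finrank_euclideanSpace, Fintype.card_fin, ← Real.rpow_add (by positivity)]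
  have : -(d : ℝ) / 2 + (d : ℝ) / 2 = 0 := by ring
  rw [this, Real.rpow_zero]

lemma gaussDensity_nonneg (d : ℕ) {σ : ℝ} (hσ : 0 < σ) (z : Euc d) : 0 ≤ gaussDensity d σ z := by
  rw [gaussDensity_eq]; exact gs_nonneg hσ

/-- Gaussian smoothing with variance `σ`. -/
noncomputable def Qg (d : ℕ) (σ : ℝ) (f : Euc d → ℝ) (x : Euc d) : ℝ :=
  ∫ z, gaussDensity d σ z * f (x - z)

lemma heatP_eq (d : ℕ) (c H t : ℝ) (f : Euc d → ℝ) (x : Euc d) :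
    heatP d c H t f x = Qg d (c * t ^ (2 * H)) f x := by
  unfold heatP Qg
  have := integral_sub_left_eq_self
    (fun z => gaussDensity d (c * t ^ (2 * H)) z * f (x - z)) volume x
  rw [← this]
  simp

/-- Hypotheses on `f`. -/
structure HF (d : ℕ) (α F : ℝ) (f : Euc d → ℝ) : Prop where
  meas : Measurable f
  bdd : ∃ C, ∀ x, |f x| ≤ C
  hol : ∀ x y, |f x - f y| ≤ F * ‖x - y‖ ^ α
  nn : 0 ≤ F

lemma HF.integrable {d : ℕ} {α F : ℝ} {f : Euc d → ℝ} (hf : HF d α F f) {K : Euc d → ℝ}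
    (hK : Integrable K) (x : Euc d) : Integrable (fun z => K z * f (x - z)) := by
  obtain ⟨C, hC⟩ := hf.bdd
  refine hK.mul_bdd (c := C) ?_ (Eventually.of_forall fun z => hC _)
  exact (hf.meas.comp (measurable_const.sub measurable_id)).aestronglyMeasurable

/-- The moment constant. -/
noncomputable def kM (d : ℕ) : ℝ := ∫ z : Euc d, 64 * Real.exp (-(1 / 64) * ‖z‖ ^ 2)

lemma kM_nonneg (d : ℕ) : 0 ≤ kM d := integral_nonneg fun z => by positivity

lemma rpow_le_one_add {r α : ℝ} (hr : 0 ≤ r) (h0 : 0 ≤ α) (h1 : α ≤ 1) : r ^ α ≤ 1 + r := by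
  rcases le_total r 1 with h | h
  · have := Real.rpow_le_one hr h h0
    linarith
  · have := Real.rpow_le_rpow_of_exponent_le h h1
    rw [Real.rpow_one] at this
    linarith

lemma conv_bound {d : ℕ} {α F : ℝ} {f : Euc d → ℝ} (hf : HF d α F f) (h0 : 0 ≤ α) (h1 : α ≤ 1)
    {K : Euc d → ℝ} (hK : Integrable K) {C : ℝ} (hC : 0 ≤ C)
    (hb : ∀ z, |K z| ≤ C * Real.exp (-‖z‖ ^ 2 / 32)) (x : Euc d) :
    |(∫ z, K z * f (x - z)) - (∫ z, K z) * f x| ≤ C * F * kM d := by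
  rw [← integral_mul_const, ← integral_sub (hf.integrable hK x) (hK.mul_const _), kM,
    ← integral_const_mul]
  rw [← Real.norm_eq_abs]
  refine norm_integral_le_of_norm_le (((integrable_gauss_exp d (b := 1 / 64) (by norm_num)).const_mul _).const_mul _)
    (Eventually.of_forall fun z => ?_)
  rw [← mul_sub, Real.norm_eq_abs, abs_mul]
  have a := hf.hol (x - z) x
  have e : ‖x - z - x‖ = ‖z‖ := by rw [sub_sub_cancel_left, norm_neg]
  rw [e] at a
  have hF := hf.nn
  have b : 1 + ‖z‖ ≤ 64 * Real.exp (‖z‖ ^ 2 / 64) := by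
    have := Real.add_one_le_exp (‖z‖ ^ 2 / 64)
    nlinarith [sq_nonneg (‖z‖ - 1)]
  have c := rpow_le_one_add (norm_nonneg z) h0 h1
  calc |K z| * |f (x - z) - f x|
      ≤ (C * Real.exp (-‖z‖ ^ 2 / 32)) * (F * (64 * Real.exp (‖z‖ ^ 2 / 64))) := by
        gcongr
        · exact hb z
        · exact a.trans (mul_le_mul_of_nonneg_left (c.trans b) hF)
    _ = C * F * (64 * (Real.exp (-‖z‖ ^ 2 / 32) * Real.exp (‖z‖ ^ 2 / 64))) := by ring
    _ = _ := by rw [← Real.exp_add]; congr 3; ring_nf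

lemma Qg_contr {d : ℕ} {α F : ℝ} {f : Euc d → ℝ} (hf : HF d α F f) {σ : ℝ} (hσ : 0 < σ)
    (x y : Euc d) : |Qg d σ f x - Qg d σ f y| ≤ F * ‖x - y‖ ^ α := by
  unfold Qg
  have hG := gaussDensity_integrable d hσ
  rw [← integral_sub (hf.integrable hG x) (hf.integrable hG y)]
  have : F * ‖x - y‖ ^ α = ∫ z, gaussDensity d σ z * (F * ‖x - y‖ ^ α) := by
    rw [integral_mul_const, gaussDensity_integral d hσ, one_mul]
  rw [this]
  rw [← Real.norm_eq_abs]
  refine norm_integral_le_of_norm_le (hG.mul_const _) (Eventually.of_forall fun z => ?_)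
  rw [← mul_sub, Real.norm_eq_abs, abs_mul, abs_of_nonneg (gaussDensity_nonneg d hσ z)]
  have a := hf.hol (x - z) (y - z)
  rw [sub_sub_sub_cancel_right] at a
  exact mul_le_mul_of_nonneg_left a (gaussDensity_nonneg d hσ z)

lemma Qg_shift (d : ℕ) (σ : ℝ) (f : Euc d → ℝ) (x h : Euc d) :
    Qg d σ f (x + h) = ∫ z, gaussDensity d σ (z + h) * f (x - z) := by
  unfold Qg
  rw [← integral_add_right_eq_self (μ := volume) (fun z => gaussDensity d σ z * f (x + h - z)) h]
  congr 1
  funext z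
  congr 2
  abel

lemma Qg_scale (d : ℕ) {a σ : ℝ} (ha : 0 < a) (hσ : 0 < σ) (f : Euc d → ℝ) (x : Euc d) :
    Qg d (a * σ) f (√a • x) = Qg d σ (fun y => f (√a • y)) x := by
  unfold Qg
  have hs : 0 < √a := Real.sqrt_pos.2 ha
  have h := Measure.integral_comp_smul_of_nonneg volume
    (fun z : Euc d => gaussDensity d (a * σ) z * f (√a • x - z)) (√a) (hR := hs.le)
  rw [finrank_euclideanSpace, Fintype.card_fin] at h
  have hp : 0 < √a ^ d := pow_pos hs d
  rw [smul_eq_mul, inv_mul_eq_div, eq_div_iff hp.ne'] at h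
  rw [← h, ← integral_mul_const]
  congr 1
  funext w
  have hpi := Real.pi_pos
  have e : gaussDensity d (a * σ) (√a • w) * √a ^ d = gaussDensity d σ w := by
    unfold gaussDensity
    rw [norm_smul, Real.norm_of_nonneg hs.le, mul_pow, Real.sq_sqrt ha.le]
    have e1 : 2 * Real.pi * (a * σ) = a * (2 * Real.pi * σ) := by ring
    have e2 : -(a * ‖w‖ ^ 2) / (2 * (a * σ)) = -‖w‖ ^ 2 / (2 * σ) := by field_simp
    have e3 : √a ^ d = a ^ ((d : ℝ) / 2) := by
      rw [Real.sqrt_eq_rpow, ← Real.rpow_mul_natCast ha.le]; congr 1; ring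
    rw [e1, e2, e3, Real.mul_rpow ha.le (by positivity)]
    have e4 : a ^ (-(d : ℝ) / 2) * a ^ ((d : ℝ) / 2) = 1 := by
      rw [← Real.rpow_add ha]
      have : -(d : ℝ) / 2 + (d : ℝ) / 2 = 0 := by ring
      rw [this, Real.rpow_zero]
    linear_combination ((2 * Real.pi * σ) ^ (-(d : ℝ) / 2) * Real.exp (-‖w‖ ^ 2 / (2 * σ))) * e4
  rw [← e]
  simp only [smul_sub]
  ring

lemma HF.scale {d : ℕ} {α F : ℝ} {f : Euc d → ℝ} (hf : HF d α F f) {a : ℝ} (ha : 0 < a) :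
    HF d α (a ^ (α / 2) * F) (fun y => f (√a • y)) where
  meas := hf.meas.comp (measurable_const_smul _)
  bdd := by obtain ⟨C, hC⟩ := hf.bdd; exact ⟨C, fun x => hC _⟩
  hol x y := by
    refine (hf.hol _ _).trans (le_of_eq ?_)
    rw [← smul_sub, norm_smul, Real.norm_of_nonneg (Real.sqrt_nonneg a),
      Real.mul_rpow (Real.sqrt_nonneg a) (norm_nonneg _), Real.sqrt_eq_rpow, ← Real.rpow_mul ha.le]
    have : 1 / 2 * α = α / 2 := by ring
    rw [this]; ring
  nn := mul_nonneg (by positivity) hf.nn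

/-- Unit-scale bounds. -/
lemma unit1 {d : ℕ} {α F : ℝ} {f : Euc d → ℝ} (hf : HF d α F f) (h0 : 0 ≤ α) (h1 : α ≤ 1)
    (x : Euc d) : |Qg d 1 f x - f x| ≤ kC d * kM d * F := by
  have := conv_bound hf h0 h1 (gaussDensity_integrable d one_pos) (kC_pos d).le (ker1 d) x
  rw [gaussDensity_integral d one_pos, one_mul] at this
  exact this.trans (le_of_eq (by ring))

lemma unit2 {d : ℕ} {α F : ℝ} {f : Euc d → ℝ} (hf : HF d α F f) (h0 : 0 ≤ α) (h1 : α ≤ 1)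
    (x h : Euc d) (hh : ‖h‖ ≤ 1) : |Qg d 1 f (x + h) - Qg d 1 f x| ≤ kC d * kM d * F * ‖h‖ := by
  have hG := gaussDensity_integrable d one_pos
  have hG' := hG.comp_add_right h
  have := conv_bound hf h0 h1 (hG'.sub hG) (mul_nonneg (kC_pos d).le (norm_nonneg h))
    (fun z => ker2 d z h hh) x
  simp only [Pi.sub_apply] at this
  rw [integral_sub hG' hG, integral_add_right_eq_self (gaussDensity d 1), sub_self, zero_mul,
    sub_zero] at this
  simp only [sub_mul] at this
  rw [integral_sub (hf.integrable hG' x) (hf.integrable hG x), ← Qg_shift] at this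
  exact this.trans (le_of_eq (by ring))

lemma unit3 {d : ℕ} {α F : ℝ} {f : Euc d → ℝ} (hf : HF d α F f) (h0 : 0 ≤ α) (h1 : α ≤ 1)
    (x : Euc d) {b : ℝ} (hb1 : 1 ≤ b) (hb2 : b ≤ 2) :
    |Qg d b f x - Qg d 1 f x| ≤ kC d * kM d * F * (b - 1) := by
  have hG := gaussDensity_integrable d one_pos
  have hb0 : 0 < b := by linarith
  have hG' := gaussDensity_integrable d hb0
  have := conv_bound hf h0 h1 (hG'.sub hG) (mul_nonneg (kC_pos d).le (sub_nonneg.2 hb1))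
    (fun z => ker3 d z b hb1 hb2) x
  simp only [Pi.sub_apply] at this
  rw [integral_sub hG' hG, gaussDensity_integral d one_pos, gaussDensity_integral d hb0, sub_self,
    zero_mul, sub_zero] at this
  simp only [sub_mul] at this
  rw [integral_sub (hf.integrable hG' x) (hf.integrable hG x)] at this
  exact this.trans (le_of_eq (by ring))

lemma unit4 {d : ℕ} {α F : ℝ} {f : Euc d → ℝ} (hf : HF d α F f) (h0 : 0 ≤ α) (h1 : α ≤ 1)
    (x h : Euc d) (hh : ‖h‖ ≤ 1) {b : ℝ} (hb1 : 1 ≤ b) (hb2 : b ≤ 2) :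
    |(Qg d b f (x + h) - Qg d 1 f (x + h)) - (Qg d b f x - Qg d 1 f x)|
      ≤ kC d * kM d * F * (b - 1) * ‖h‖ := by
  have hG := gaussDensity_integrable d one_pos
  have hb0 : 0 < b := by linarith
  have hB := gaussDensity_integrable d hb0
  have hG' := hG.comp_add_right h
  have hB' := hB.comp_add_right h
  have hS' : Integrable (fun z => gaussDensity d b (z + h) - gaussDensity d 1 (z + h)) :=
    hB'.sub hG'
  have hS : Integrable (fun z => gaussDensity d b z - gaussDensity d 1 z) := hB.sub hG
  have i1 := hf.integrable hB' x
  have i2 := hf.integrable hG' x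
  have i3 := hf.integrable hB x
  have i4 := hf.integrable hG x
  have j1 : Integrable (fun z => gaussDensity d b (z + h) * f (x - z)
    - gaussDensity d 1 (z + h) * f (x - z)) := i1.sub i2
  have j2 : Integrable (fun z => gaussDensity d b z * f (x - z)
    - gaussDensity d 1 z * f (x - z)) := i3.sub i4
  have := conv_bound hf h0 h1 (hS'.sub hS)
    (mul_nonneg (mul_nonneg (kC_pos d).le (sub_nonneg.2 hb1)) (norm_nonneg h))
    (fun z => ker4 d z h hh b hb1 hb2) x
  simp only [Pi.sub_apply] at this
  rw [integral_sub hS' hS, integral_sub hB' hG', integral_sub hB hG,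
    integral_add_right_eq_self (gaussDensity d 1),
    integral_add_right_eq_self (gaussDensity d b), sub_self,
    zero_mul, sub_zero] at this
  simp only [sub_mul] at this
  rw [integral_sub j1 j2, integral_sub i1 i2, integral_sub i3 i4, ← Qg_shift, ← Qg_shift] at this
  exact this.trans (le_of_eq (by ring))

/-- `kC * kM`. -/
noncomputable def kW (d : ℕ) : ℝ := kC d * kM d

lemma kW_nonneg (d : ℕ) : 0 ≤ kW d := mul_nonneg (kC_pos d).le (kM_nonneg d)

lemma le_rpow_small {r β : ℝ} (hr : 0 ≤ r) (h : r ≤ 1) (h0 : 0 ≤ β) (h1 : β ≤ 1) : r ≤ r ^ β := by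
  have := Real.rpow_le_rpow_of_exponent_ge' hr h h0 h1
  rwa [Real.rpow_one] at this

lemma unit5 {d : ℕ} {α β F : ℝ} {f : Euc d → ℝ} (hf : HF d α F f) (h0 : 0 ≤ α) (h1 : α ≤ 1)
    (hβ0 : 0 ≤ β) (hβ1 : β ≤ 1)
    (x y : Euc d) {b : ℝ} (hb1 : 1 ≤ b) (hb2 : b ≤ 2) :
    |(Qg d b f x - Qg d 1 f x) - (Qg d b f y - Qg d 1 f y)|
      ≤ 2 * kW d * F * (b - 1) * ‖x - y‖ ^ β := by
  have hW := kW_nonneg d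
  have hF := hf.nn
  have hb : 0 ≤ b - 1 := by linarith
  have hP : 0 ≤ kW d * F * (b - 1) := by positivity
  rcases le_total ‖x - y‖ 1 with h | h
  · have := unit4 hf h0 h1 y (x - y) h hb1 hb2
    rw [add_sub_cancel] at this
    refine this.trans ?_
    have e := le_rpow_small (norm_nonneg (x - y)) h hβ0 hβ1
    have e' := mul_le_mul_of_nonneg_left e hP
    have e'' : 0 ≤ kW d * F * (b - 1) * ‖x - y‖ ^ β := by positivity
    change kW d * F * (b - 1) * ‖x - y‖ ≤ _
    linarith
  · have a1 := unit3 hf h0 h1 x hb1 hb2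
    have a2 := unit3 hf h0 h1 y hb1 hb2
    have e : 1 ≤ ‖x - y‖ ^ β := Real.one_le_rpow h hβ0
    have e' := mul_le_mul_of_nonneg_left e hP
    change _ ≤ kW d * F * (b - 1) at a1
    change _ ≤ kW d * F * (b - 1) at a2
    have := abs_sub (Qg d b f x - Qg d 1 f x) (Qg d b f y - Qg d 1 f y)
    linarith

lemma unit6 {d : ℕ} {α β F : ℝ} {f : Euc d → ℝ} (hf : HF d α F f) (h0 : 0 ≤ α) (h1 : α ≤ 1)
    (hβ0 : 0 ≤ β) (hβ1 : β ≤ 1) (hαβ : α ≤ β) (x y : Euc d) :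
    |Qg d 1 f x - Qg d 1 f y| ≤ (kW d + 1) * F * ‖x - y‖ ^ β := by
  have hW := kW_nonneg d
  have hF := hf.nn
  have e1 : 0 ≤ F * ‖x - y‖ ^ β := by positivity
  have e2 : 0 ≤ kW d * F * ‖x - y‖ ^ β := by positivity
  rcases le_total ‖x - y‖ 1 with h | h
  · have := unit2 hf h0 h1 y (x - y) h
    rw [add_sub_cancel] at this
    have e := le_rpow_small (norm_nonneg (x - y)) h hβ0 hβ1
    have e' := mul_le_mul_of_nonneg_left e (mul_nonneg hW hF)
    change _ ≤ kW d * F * ‖x - y‖ at this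
    linarith
  · have := Qg_contr hf one_pos x y
    have e := mul_le_mul_of_nonneg_left (Real.rpow_le_rpow_of_exponent_le h hαβ) hF
    linarith

lemma smul_sqrt_inv {d : ℕ} {a : ℝ} (ha : 0 < a) (x : Euc d) : x = √a • ((√a)⁻¹ • x) := by
  rw [smul_smul, mul_inv_cancel₀ (Real.sqrt_pos.2 ha).ne', one_smul]

lemma Qg_scale' (d : ℕ) {a r : ℝ} (ha : 0 < a) (hr : 0 < r) (f : Euc d → ℝ) (x : Euc d) :
    Qg d r f x = Qg d (r / a) (fun y => f (√a • y)) ((√a)⁻¹ • x) := by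
  rw [← Qg_scale d ha (div_pos hr ha), ← smul_sqrt_inv ha, mul_div_cancel₀ _ ha.ne']

lemma norm_scale {d : ℕ} {a α β : ℝ} (ha : 0 < a) (x y : Euc d) :
    a ^ (α / 2) * ‖(√a)⁻¹ • x - (√a)⁻¹ • y‖ ^ β = a ^ ((α - β) / 2) * ‖x - y‖ ^ β := by
  have hs : 0 < √a := Real.sqrt_pos.2 ha
  rw [← smul_sub, norm_smul, norm_inv, Real.norm_of_nonneg hs.le,
    Real.mul_rpow (inv_nonneg.2 hs.le) (norm_nonneg _), Real.inv_rpow hs.le, Real.sqrt_eq_rpow,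
    ← Real.rpow_mul ha.le, ← Real.rpow_neg ha.le, ← mul_assoc, ← Real.rpow_add ha]
  congr 2
  ring

lemma near_sup {d : ℕ} {α F : ℝ} {f : Euc d → ℝ} (hf : HF d α F f) (h0 : 0 ≤ α) (h1 : α ≤ 1)
    {a b : ℝ} (ha : 0 < a) (hab : a ≤ b) (hb : b ≤ 2 * a) (x : Euc d) :
    |Qg d b f x - Qg d a f x| ≤ kW d * (a ^ (α / 2) * F) * (b / a - 1) := by
  rw [Qg_scale' d ha (ha.trans_le hab), Qg_scale' d ha ha, div_self ha.ne']
  exact unit3 (hf.scale ha) h0 h1 _ ((one_le_div ha).2 hab) ((div_le_iff₀ ha).2 hb)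

lemma near_hol {d : ℕ} {α β F : ℝ} {f : Euc d → ℝ} (hf : HF d α F f) (h0 : 0 ≤ α) (h1 : α ≤ 1)
    (hβ0 : 0 ≤ β) (hβ1 : β ≤ 1)
    {a b : ℝ} (ha : 0 < a) (hab : a ≤ b) (hb : b ≤ 2 * a) (x y : Euc d) :
    |(Qg d b f x - Qg d a f x) - (Qg d b f y - Qg d a f y)|
      ≤ 2 * kW d * F * (b / a - 1) * (a ^ ((α - β) / 2) * ‖x - y‖ ^ β) := by
  rw [← norm_scale (α := α) ha x y]
  rw [Qg_scale' d ha (ha.trans_le hab) f x, Qg_scale' d ha ha f x,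
    Qg_scale' d ha (ha.trans_le hab) f y, Qg_scale' d ha ha f y, div_self ha.ne']
  refine (unit5 (hf.scale ha) h0 h1 hβ0 hβ1 _ _ ((one_le_div ha).2 hab)
    ((div_le_iff₀ ha).2 hb)).trans (le_of_eq ?_)
  ring

lemma far_sup {d : ℕ} {α F : ℝ} {f : Euc d → ℝ} (hf : HF d α F f) (h0 : 0 ≤ α) (h1 : α ≤ 1)
    {a : ℝ} (ha : 0 < a) (x : Euc d) :
    |Qg d a f x - f x| ≤ kW d * (a ^ (α / 2) * F) := by
  have := unit1 (hf.scale ha) h0 h1 ((√a)⁻¹ • x)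
  rw [← smul_sqrt_inv ha] at this
  rw [Qg_scale' d ha ha, div_self ha.ne']
  exact this

lemma far_hol1 {d : ℕ} {α β F : ℝ} {f : Euc d → ℝ} (hf : HF d α F f) (h0 : 0 ≤ α) (h1 : α ≤ 1)
    (hβ0 : 0 ≤ β) (hβ1 : β ≤ 1) (hαβ : α ≤ β) {a : ℝ} (ha : 0 < a) (x y : Euc d) :
    |Qg d a f x - Qg d a f y| ≤ (kW d + 1) * F * (a ^ ((α - β) / 2) * ‖x - y‖ ^ β) := by
  rw [← norm_scale (α := α) ha x y, Qg_scale' d ha ha f x, Qg_scale' d ha ha f y, div_self ha.ne']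
  refine (unit6 (hf.scale ha) h0 h1 hβ0 hβ1 hαβ _ _).trans (le_of_eq ?_)
  ring

lemma far_sup2 {d : ℕ} {α F : ℝ} {f : Euc d → ℝ} (hf : HF d α F f) (h0 : 0 ≤ α) (h1 : α ≤ 1)
    {a b : ℝ} (ha : 0 < a) (hab : a ≤ b) (x : Euc d) :
    |Qg d b f x - Qg d a f x| ≤ 2 * kW d * F * b ^ (α / 2) := by
  have a1 := far_sup hf h0 h1 ha x
  have a2 := far_sup hf h0 h1 (ha.trans_le hab) x
  have hW := kW_nonneg d
  have hF := hf.nn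
  have e : a ^ (α / 2) ≤ b ^ (α / 2) := Real.rpow_le_rpow ha.le hab (by linarith)
  have e' := mul_le_mul_of_nonneg_left e (mul_nonneg hW hF)
  have := abs_sub (Qg d b f x - f x) (Qg d a f x - f x)
  rw [sub_sub_sub_cancel_right] at this
  linarith

lemma far_hol2 {d : ℕ} {α β F : ℝ} {f : Euc d → ℝ} (hf : HF d α F f) (h0 : 0 ≤ α) (h1 : α ≤ 1)
    (hβ0 : 0 ≤ β) (hαβ : β ≤ α) {a b : ℝ} (ha : 0 < a) (hab : a ≤ b) (x y : Euc d) :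
    |(Qg d b f x - Qg d a f x) - (Qg d b f y - Qg d a f y)|
      ≤ (4 * kW d + 2) * F * (b ^ ((α - β) / 2) * ‖x - y‖ ^ β) := by
  have hb := ha.trans_le hab
  have hW := kW_nonneg d
  have hF := hf.nn
  rw [← norm_scale (α := α) hb x y]
  set r := ‖(√b)⁻¹ • x - (√b)⁻¹ • y‖ with hr
  have hr0 : 0 ≤ r := norm_nonneg _
  have hp : 0 ≤ b ^ (α / 2) := by positivity
  have P1 : 0 ≤ F * (b ^ (α / 2) * r ^ β) := by positivity
  have P2 : 0 ≤ kW d * (F * (b ^ (α / 2) * r ^ β)) := by positivity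
  rcases le_total r 1 with h | h
  · have c1 := Qg_contr hf hb x y
    have c2 := Qg_contr hf ha x y
    have e : ‖x - y‖ ^ α = b ^ (α / 2) * r ^ α := by
      rw [hr, norm_scale hb x y]; simp
    rw [e] at c1 c2
    have e2 : r ^ α ≤ r ^ β := Real.rpow_le_rpow_of_exponent_ge' hr0 h hβ0 hαβ
    have e3 : F * (b ^ (α / 2) * r ^ α) ≤ F * (b ^ (α / 2) * r ^ β) := by gcongr
    have := abs_sub (Qg d b f x - Qg d b f y) (Qg d a f x - Qg d a f y)
    rw [sub_sub_sub_comm]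
    linarith
  · have a1 := far_sup2 hf h0 h1 ha hab x
    have a2 := far_sup2 hf h0 h1 ha hab y
    have e : 1 ≤ r ^ β := Real.one_le_rpow h hβ0
    have e' := mul_le_mul_of_nonneg_left e (mul_nonneg (mul_nonneg hW hF) hp)
    have := abs_sub (Qg d b f x - Qg d a f x) (Qg d b f y - Qg d a f y)
    linarith

lemma core {d : ℕ} {α β δ c F : ℝ} {f : Euc d → ℝ} (hf : HF d α F f) (h0 : 0 ≤ α) (h1 : α ≤ 1)
    (hβ0 : 0 ≤ β) (hβ1 : β ≤ 1) (hδ0 : 0 < δ) (hδ_low : (α - β) / 2 ≤ δ) (hδ1 : δ ≤ 1)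
    (hc : 0 < c) {a b : ℝ} (ha : 0 < a) (hab : a ≤ b) (hbc : b ≤ c) (x y : Euc d) :
    |Qg d b f x - Qg d a f x| ≤
        (8 * kW d + 4) * (1 + c ^ (β / 2)) * (F * ((b / a - 1) ^ δ * a ^ ((α - β) / 2))) ∧
    |(Qg d b f x - Qg d a f x) - (Qg d b f y - Qg d a f y)| ≤
        (8 * kW d + 4) * (1 + c ^ (β / 2)) * (F * ((b / a - 1) ^ δ * a ^ ((α - β) / 2)))
          * ‖x - y‖ ^ β := by
  have hb := ha.trans_le hab
  have hW := kW_nonneg d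
  have hF := hf.nn
  set ρ := b / a - 1 with hρ
  have hρ0 : 0 ≤ ρ := by rw [hρ, sub_nonneg, one_le_div ha]; exact hab
  set T := ρ ^ δ * a ^ ((α - β) / 2) with hT
  have hT0 : 0 ≤ T := by positivity
  set E := c ^ (β / 2) with hE
  have hE0 : 0 ≤ E := by positivity
  set n := ‖x - y‖ ^ β with hn
  have hn0 : 0 ≤ n := by positivity
  have split : ∀ r, 0 < r → r ≤ c → r ^ (α / 2) ≤ E * r ^ ((α - β) / 2) := by
    intro r hr hrc
    have e : r ^ (α / 2) = r ^ (β / 2) * r ^ ((α - β) / 2) := by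
      rw [← Real.rpow_add hr]; congr 1; ring
    rw [e]
    have e2 : r ^ (β / 2) ≤ E := Real.rpow_le_rpow hr.le hrc (by linarith)
    gcongr
  have hFT : 0 ≤ F * T := by positivity
  have hWFT : 0 ≤ kW d * (F * T) := by positivity
  -- it suffices to prove the following two bounds
  suffices hh : |Qg d b f x - Qg d a f x| ≤ (8 * kW d + 4) * E * (F * T) ∧
      |(Qg d b f x - Qg d a f x) - (Qg d b f y - Qg d a f y)| ≤ (8 * kW d + 4) * (F * T) * n by
    constructor
    · refine hh.1.trans ?_
      gcongr
      linarith
    · refine hh.2.trans ?_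
      gcongr
      nlinarith
  rcases le_total b (2 * a) with hba | hba
  · have hρ1 : ρ ≤ 1 := by
      rw [hρ, sub_le_iff_le_add, div_le_iff₀ ha]; linarith
    have hρδ : ρ ≤ ρ ^ δ := le_rpow_small hρ0 hρ1 hδ0.le hδ1
    constructor
    · refine (near_sup hf h0 h1 ha hab hba x).trans ?_
      calc kW d * (a ^ (α / 2) * F) * ρ
          ≤ kW d * (E * a ^ ((α - β) / 2) * F) * ρ ^ δ := by
            gcongr
            exact split a ha (hab.trans hbc)
        _ = kW d * E * (F * T) := by rw [hT]; ring
        _ ≤ _ := by gcongr; linarith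
    · refine (near_hol hf h0 h1 hβ0 hβ1 ha hab hba x y).trans ?_
      calc 2 * kW d * F * ρ * (a ^ ((α - β) / 2) * n)
          ≤ 2 * kW d * F * ρ ^ δ * (a ^ ((α - β) / 2) * n) := by gcongr
        _ = 2 * kW d * (F * T) * n := by rw [hT]; ring
        _ ≤ _ := by gcongr; linarith
  · have hρ1 : 1 ≤ ρ := by
      rw [hρ, le_sub_iff_add_le, le_div_iff₀ ha]; linarith
    have key : b ^ ((α - β) / 2) ≤ 2 * T := by
      have e : b = (1 + ρ) * a := by rw [hρ]; field_simp; ring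
      have e2 : (1 + ρ) ^ ((α - β) / 2) ≤ 2 * ρ ^ δ :=
        calc (1 + ρ) ^ ((α - β) / 2) ≤ (1 + ρ) ^ δ :=
              Real.rpow_le_rpow_of_exponent_le (by linarith) hδ_low
          _ ≤ (2 * ρ) ^ δ := Real.rpow_le_rpow (by linarith) (by linarith) hδ0.le
          _ = 2 ^ δ * ρ ^ δ := Real.mul_rpow (by norm_num) hρ0
          _ ≤ 2 * ρ ^ δ := by
              gcongr
              have := Real.rpow_le_rpow_of_exponent_le (x := 2) (by norm_num) hδ1
              rwa [Real.rpow_one] at this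
      rw [e, Real.mul_rpow (by linarith) ha.le, hT, ← mul_assoc]
      gcongr
    constructor
    · refine (far_sup2 hf h0 h1 ha hab x).trans ?_
      calc 2 * kW d * F * b ^ (α / 2) ≤ 2 * kW d * F * (E * (2 * T)) := by
            gcongr
            exact (split b hb hbc).trans (by gcongr)
        _ = 4 * kW d * E * (F * T) := by ring
        _ ≤ _ := by gcongr; linarith
    · rcases le_total β α with hβα | hαβ
      · refine (far_hol2 hf h0 h1 hβ0 hβα ha hab x y).trans ?_
        calc (4 * kW d + 2) * F * (b ^ ((α - β) / 2) * n)
            ≤ (4 * kW d + 2) * F * ((2 * T) * n) := by gcongr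
          _ = _ := by ring
      · have c1 := far_hol1 hf h0 h1 hβ0 hβ1 hαβ hb x y
        have c2 := far_hol1 hf h0 h1 hβ0 hβ1 hαβ ha x y
        have e : b ^ ((α - β) / 2) ≤ a ^ ((α - β) / 2) :=
          Real.rpow_le_rpow_of_nonpos ha hab (by linarith)
        have e2 : a ^ ((α - β) / 2) ≤ T := by
          rw [hT]
          exact le_mul_of_one_le_left (by positivity) (Real.one_le_rpow hρ1 hδ0.le)
        have g : ∀ r, r ≤ T → (kW d + 1) * F * (r * n) ≤ (kW d + 1) * F * (T * n) := by
          intro r hr; gcongr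
        have g1 := g _ (e.trans e2)
        have g2 := g _ e2
        have := abs_sub (Qg d b f x - Qg d b f y) (Qg d a f x - Qg d a f y)
        rw [sub_sub_sub_comm]
        have P1 : 0 ≤ F * T * n := by positivity
        have P2 : 0 ≤ kW d * (F * T * n) := by positivity
        linarith

lemma holderNorm_HF {d : ℕ} {α : ℝ} {f : Euc d → ℝ} (hα0 : 0 ≤ α) (hm : Measurable f)
    (hb : ∃ C, ∀ x, |f x| ≤ C) (hh : 0 < α → ∃ C, ∀ x y, |f x - f y| ≤ C * ‖x - y‖ ^ α) :
    HF d α (holderNorm d α f) f := by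
  have n1 : 0 ≤ ⨆ x, |f x| := Real.iSup_nonneg fun x => abs_nonneg _
  have n2 : 0 ≤ ⨆ q : {q : Euc d × Euc d // q.1 ≠ q.2},
      |f q.1.1 - f q.1.2| / ‖q.1.1 - q.1.2‖ ^ α := Real.iSup_nonneg fun q => by positivity
  have hex : ∃ C, ∀ x y, |f x - f y| ≤ C * ‖x - y‖ ^ α := by
    rcases hα0.lt_or_eq with h | h
    · exact hh h
    · obtain ⟨C, hC⟩ := hb
      refine ⟨C + C, fun x y => ?_⟩
      rw [← h, Real.rpow_zero, mul_one]
      exact (abs_sub _ _).trans (add_le_add (hC x) (hC y))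
  refine ⟨hm, hb, fun x y => ?_, add_nonneg n1 n2⟩
  by_cases hxy : x = y
  · subst hxy
    rw [sub_self, abs_zero]
    exact mul_nonneg (add_nonneg n1 n2) (by positivity)
  · obtain ⟨C, hC⟩ := hex
    have hpos : ∀ x y : Euc d, x ≠ y → 0 < ‖x - y‖ ^ α := fun x y h =>
      Real.rpow_pos_of_pos (norm_pos_iff.2 (sub_ne_zero.2 h)) _
    have hB : BddAbove (Set.range fun q : {q : Euc d × Euc d // q.1 ≠ q.2} =>
        |f q.1.1 - f q.1.2| / ‖q.1.1 - q.1.2‖ ^ α) := by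
      refine ⟨C, ?_⟩
      rintro _ ⟨q, rfl⟩
      exact (div_le_iff₀ (hpos _ _ q.2)).2 (hC _ _)
    have := le_ciSup hB ⟨(x, y), hxy⟩
    rw [← div_le_iff₀ (hpos x y hxy)]
    unfold holderNorm
    exact this.trans (by linarith)


/-- **Time-regularity estimate for the Gaussian semigroup** (Lemma 3.3, (3.8)):
for `f ∈ C^α`, `δ ∈ [(α-β)/2, 1]`, `δ > 0`, and `0 < s ≤ t ≤ 1`,
`‖P_t^H f - P_s^H f‖_{C^β} ≤ N s^{H(α-β) - 2Hδ} |t^{2H} - s^{2H}|^δ ‖f‖_{C^α}`,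
where `N = N(H, c, α, β, δ, d)`. -/
theorem heat_time_regularity_estimate
    (d : ℕ) (H c : ℝ) (hH : 0 < H) (hc : 0 < c)
    (α β δ : ℝ) (hα0 : 0 ≤ α) (hα1 : α ≤ 1) (hβ0 : 0 ≤ β) (hβ1 : β ≤ 1)
    (hδ0 : 0 < δ) (hδ_low : (α - β) / 2 ≤ δ) (hδ1 : δ ≤ 1) :
    ∃ N : ℝ, ∀ f : Euc d → ℝ,
      -- `f ∈ C^α` : bounded measurable, and `α`-Hölder when `α > 0`
      Measurable f → (∃ C, ∀ x, |f x| ≤ C) →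
      (0 < α → ∃ C, ∀ x y, |f x - f y| ≤ C * ‖x - y‖ ^ α) →
      ∀ s t : ℝ, 0 < s → s ≤ t → t ≤ 1 →
        holderNorm d β (fun x => heatP d c H t f x - heatP d c H s f x)
          ≤ N * s ^ (H * (α - β) - 2 * H * δ)
              * |t ^ (2 * H) - s ^ (2 * H)| ^ δ * holderNorm d α f := by
  refine ⟨2 * ((8 * kW d + 4) * (1 + c ^ (β / 2))) * c ^ ((α - β) / 2), ?_⟩
  intro f hm hb hh s t hs hst ht
  have hf := holderNorm_HF hα0 hm hb hh
  set F := holderNorm d α f with hFdef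
  have ht0 : 0 < t := hs.trans_le hst
  set A := s ^ (2 * H) with hA
  set B := t ^ (2 * H) with hB
  have hA0 : 0 < A := Real.rpow_pos_of_pos hs _
  have hAB : A ≤ B := Real.rpow_le_rpow hs.le hst (by linarith)
  have hB1 : B ≤ 1 := Real.rpow_le_one ht0.le ht (by linarith)
  have hcore := fun x y => core hf hα0 hα1 hβ0 hβ1 hδ0 hδ_low hδ1 hc (a := c * A) (b := c * B)
    (by positivity) (by gcongr) (by nlinarith) x y
  have hW := kW_nonneg d
  have hF := hf.nn
  have hT : (c * B / (c * A) - 1) ^ δ * (c * A) ^ ((α - β) / 2) =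
      c ^ ((α - β) / 2) * (s ^ (H * (α - β) - 2 * H * δ) * |B - A| ^ δ) := by
    have hBA : 0 ≤ B - A := by linarith
    have e1 : c * B / (c * A) - 1 = (B - A) / A := by field_simp
    have e2 : s ^ (H * (α - β) - 2 * H * δ) = A ^ ((α - β) / 2) / A ^ δ := by
      rw [hA, ← Real.rpow_mul hs.le, ← Real.rpow_mul hs.le, ← Real.rpow_sub hs]
      congr 1; ring
    rw [e1, e2, abs_of_nonneg hBA, Real.div_rpow hBA hA0.le, Real.mul_rpow hc.le hA0.le]
    ring
  rw [hT] at hcore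
  set S := (8 * kW d + 4) * (1 + c ^ (β / 2)) *
    (F * (c ^ ((α - β) / 2) * (s ^ (H * (α - β) - 2 * H * δ) * |B - A| ^ δ))) with hS
  have hS0 : 0 ≤ S := by positivity
  have hfin : holderNorm d β (fun x => heatP d c H t f x - heatP d c H s f x) ≤ S + S := by
    unfold holderNorm
    simp only [heatP_eq]
    refine add_le_add (Real.iSup_le (fun x => (hcore x x).1) hS0) (Real.iSup_le (fun q => ?_) hS0)
    have hpos : 0 < ‖q.1.1 - q.1.2‖ ^ β :=
      Real.rpow_pos_of_pos (norm_pos_iff.2 (sub_ne_zero.2 q.2)) _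
    exact (div_le_iff₀ hpos).2 (hcore q.1.1 q.1.2).2
  refine hfin.trans (le_of_eq ?_)
  rw [hS]
  ring
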